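/- For each positive integer n, the sum over all binary trees T with n vertices of the product over all vertices v of T of 1/((2h_v + 1) · 2^{2h_v - 1}) equals 1/(2n+1)!, where h_v is the hook length of v. -/

import Mathlib

/-- A binary tree: `nil` is the empty tree, and a vertex may have an empty or
nonempty left subtree and an empty or nonempty right subtree.  The binary
trees with `n` vertices are the `T : BinTree` with `T.size = n`. -/
inductive BinTree : Type where
  | nil : BinTree
  | node (l r : BinTree) : BinTree
deriving DecidableEq

/-- The number of vertices of a binary tree. -/
def BinTree.size : BinTree → ℕ
  | .nil => 0
  | .node l r => l.size + r.size + 1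

/-- The product, over all vertices `v` of a binary tree, of `f h_v`, where
`h_v` is the hook length of `v` (the number of descendants of `v`, including
`v` itself). -/
def BinTree.hookProd (f : ℕ → ℝ) : BinTree → ℝ
  | .nil => 1
  | .node l r => f (l.size + r.size + 1) * l.hookProd f * r.hookProd f

theorem aux_sum_pairs (f : ℕ → ℕ) (m : ℕ) :
    ∑ k ∈ Finset.range (2 * m), f k = ∑ i ∈ Finset.range m, (f (2 * i) + f (2 * i + 1)) := by
  induction m with
  | zero => simp
  | succ m ih =>
    rw [show 2 * (m + 1) = 2 * m + 1 + 1 by ring, Finset.sum_range_succ, Finset.sum_range_succ,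
      Finset.sum_range_succ, ih]
    ring

theorem aux_odd_choose (n : ℕ) :
    ∑ i ∈ Finset.range (n + 1), Nat.choose (2 * n + 2) (2 * i + 1) = 2 ^ (2 * n + 1) := by
  rw [← Nat.sum_range_choose (2 * n + 1), show 2 * n + 1 + 1 = 2 * (n + 1) by ring, aux_sum_pairs]
  rfl

theorem aux_conv (n : ℕ) :
    ∑ p ∈ Finset.HasAntidiagonal.antidiagonal n,
      (1 / (Nat.factorial (2 * p.1 + 1) : ℝ)) * (1 / (Nat.factorial (2 * p.2 + 1) : ℝ)) =
      2 ^ (2 * n + 1) / (Nat.factorial (2 * n + 2) : ℝ) := by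
  have h := aux_odd_choose n
  rw [← Finset.Nat.sum_antidiagonal_eq_sum_range_succ_mk
    (fun p => Nat.choose (2 * n + 2) (2 * p.1 + 1))] at h
  have h' : ((2 ^ (2 * n + 1) : ℕ) : ℝ) = _ := congrArg Nat.cast h.symm
  push_cast at h'
  rw [h', Finset.sum_div]
  refine Finset.sum_congr rfl fun p hp => ?_
  have hp' := Finset.HasAntidiagonal.mem_antidiagonal.1 hp
  rw [show 2 * n + 2 = (2 * p.1 + 1) + (2 * p.2 + 1) by omega, Nat.cast_add_choose]
  have := Nat.factorial_ne_zero (2 * p.1 + 1 + (2 * p.2 + 1))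
  field_simp

/-- Root decomposition. -/
def auxEquiv (n : ℕ) : {T : BinTree // T.size = n + 1} ≃
    Σ p : Finset.HasAntidiagonal.antidiagonal n, {T : BinTree // T.size = p.1.1} × {T : BinTree // T.size = p.1.2} where
  toFun := fun
    | ⟨.nil, h⟩ => absurd h (by simp [BinTree.size])
    | ⟨.node l r, h⟩ => ⟨⟨(l.size, r.size), by
        simp only [BinTree.size] at h; simp; omega⟩, ⟨l, rfl⟩, ⟨r, rfl⟩⟩
  invFun := fun x => ⟨.node x.2.1.1 x.2.2.1, by
    have h := Finset.HasAntidiagonal.mem_antidiagonal.1 x.1.2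
    simp only [BinTree.size, x.2.1.2, x.2.2.2, h]⟩
  left_inv := by
    rintro ⟨_ | ⟨l, r⟩, h⟩
    · simp [BinTree.size] at h
    · rfl
  right_inv := by
    rintro ⟨⟨⟨a, b⟩, h⟩, ⟨l, hl⟩, ⟨r, hr⟩⟩
    dsimp only at hl hr
    subst hl hr
    rfl

theorem auxFinite (n : ℕ) : Finite {T : BinTree // T.size = n} := by
  induction n using Nat.strong_induction_on with
  | _ n ih =>
    cases n with
    | zero =>
      have : Subsingleton {T : BinTree // T.size = 0} := by
        constructor
        rintro ⟨_ | _, h⟩ ⟨_ | _, h2⟩ <;> first | rfl | (simp [BinTree.size] at h; done) | (simp [BinTree.size] at h2; done)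
      infer_instance
    | succ n =>
      have : ∀ p : Finset.HasAntidiagonal.antidiagonal n,
          Finite ({T : BinTree // T.size = p.1.1} × {T : BinTree // T.size = p.1.2}) := by
        intro p
        have h := Finset.HasAntidiagonal.mem_antidiagonal.1 p.2
        have := ih p.1.1 (by omega)
        have := ih p.1.2 (by omega)
        infer_instance
      exact Finite.of_equiv _ (auxEquiv n).symm

theorem auxRec (f : ℕ → ℝ) (n : ℕ) :
    ∑' T : {T : BinTree // T.size = n + 1}, (T : BinTree).hookProd f =
      f (n + 1) * ∑ p ∈ Finset.HasAntidiagonal.antidiagonal n,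
        (∑' T : {T : BinTree // T.size = p.1}, (T : BinTree).hookProd f) *
        (∑' T : {T : BinTree // T.size = p.2}, (T : BinTree).hookProd f) := by
  have : ∀ n, Fintype {T : BinTree // T.size = n} := fun n =>
    have := auxFinite n
    Fintype.ofFinite _
  simp only [tsum_fintype]
  rw [← (auxEquiv n).symm.sum_comp, Fintype.sum_sigma, Finset.mul_sum,
    ← Finset.sum_coe_sort (Finset.HasAntidiagonal.antidiagonal n)]
  refine Finset.sum_congr rfl fun p _ => ?_
  rw [Fintype.sum_prod_type, Finset.sum_mul_sum, Finset.mul_sum]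
  refine Finset.sum_congr rfl fun l _ => ?_
  rw [Finset.mul_sum]
  refine Finset.sum_congr rfl fun r _ => ?_
  have h := Finset.HasAntidiagonal.mem_antidiagonal.1 p.2
  simp only [auxEquiv, Equiv.coe_fn_symm_mk, BinTree.hookProd, l.2, r.2, h, mul_assoc]

theorem auxMain (n : ℕ) :
    ∑' T : {T : BinTree // T.size = n},
      (T : BinTree).hookProd (fun h => 1 / (((2 * h + 1 : ℕ) : ℝ) * 2 ^ (2 * h - 1))) =
      1 / (Nat.factorial (2 * n + 1) : ℝ) := by
  induction n using Nat.strong_induction_on with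
  | _ n ih =>
    cases n with
    | zero =>
      rw [tsum_eq_single ⟨BinTree.nil, rfl⟩]
      · simp [BinTree.hookProd]
      · rintro ⟨_ | _, h⟩ h'
        · exact absurd rfl h'
        · simp [BinTree.size] at h
    | succ n =>
      rw [auxRec, Finset.sum_congr rfl (g := fun p =>
        (1 / (Nat.factorial (2 * p.1 + 1) : ℝ)) * (1 / (Nat.factorial (2 * p.2 + 1) : ℝ))), aux_conv]
      · rw [show 2 * (n + 1) - 1 = 2 * n + 1 by omega, show 2 * (n + 1) + 1 = (2 * n + 2) + 1 by ring,
          Nat.factorial_succ (2 * n + 2)]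
        have := Nat.factorial_ne_zero (2 * n + 2)
        push_cast
        field_simp
      · intro p hp
        have h := Finset.HasAntidiagonal.mem_antidiagonal.1 hp
        rw [ih p.1 (by omega), ih p.2 (by omega)]

/-- Han's second formula: for every positive integer `n`,
`∑_{T ∈ B(n)} ∏_{v ∈ T} 1/((2h_v+1) 2^{2h_v-1}) = 1/(2n+1)!`. -/
theorem han_second_hook_length_formula (n : ℕ) (hn : 0 < n) :
    ∑' T : {T : BinTree // T.size = n},
      (T : BinTree).hookProd (fun h => 1 / (((2 * h + 1 : ℕ) : ℝ) * 2 ^ (2 * h - 1))) =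
      1 / (Nat.factorial (2 * n + 1) : ℝ) := by
  exact auxMain n
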